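/- Let P be a nonempty property (a set of complete theories of Σ) and let S = {k ∈ ℕ : k ≥ 1 and there exists a sentence φ with P_φ finite and |P_φ| = k}. Then S is downward closed among positive integers (if k ∈ S and 1 ≤ j ≤ k then j ∈ S); consequently, if S is nonempty then either S = {1, …, n} for some n ≥ 1 or S is the set of all positive integers. -/

import Mathlib

open FirstOrder Language

/-- The finite part of the pt-spectrum of a property `P`: the set of positive integers `k` such
that `P_φ` is finite with exactly `k` elements for some sentence φ. -/
def finPtSpectrum {L : FirstOrder.Language} (P : Set L.Theory) : Set ℕ :=
  {k | 1 ≤ k ∧ ∃ φ : L.Sentence, {T ∈ P | φ ∈ T}.Finite ∧ {T ∈ P | φ ∈ T}.ncard = k}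

/-!
Among finitely many complete theories every subset `Q` is cut out by a single sentence: complete
theories are inclusion-maximal, so each `T ∈ Q` contains a sentence `χ T T'` missing from each
`T' ∉ Q`, and the disjunction over `T ∈ Q` of the conjunctions over `T' ∉ Q` of the `χ T T'` holds
in exactly the theories of `Q`. Hence if `P_φ` is finite, every subset of it has the form `P_ψ`,
and its subsets realize all smaller cardinalities.
-/

theorem eq_Icc_or_eq_Ici_of_ordConnected {α : Type*} [LinearOrder α] [SuccOrder α]
    [IsSuccArchimedean α] {s : Set α} {a : α} (hs : s.OrdConnected) (ha : IsLeast s a) :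
    (∃ b ∈ s, s = Set.Icc a b) ∨ s = Set.Ici a := by
  by_cases hbdd : BddAbove s
  · obtain ⟨b, hb⟩ := hbdd.exists_isGreatest_of_nonempty ha.nonempty
    exact .inl ⟨b, hb.1, Set.Subset.antisymm (fun x hx => ⟨ha.2 hx, hb.2 hx⟩) (hs.out ha.1 hb.1)⟩
  · refine .inr (Set.Subset.antisymm (fun x hx => ha.2 hx) fun x hx => ?_)
    obtain ⟨y, hy, hxy⟩ := not_bddAbove_iff.mp hbdd x
    exact hs.out ha.1 hy ⟨hx, hxy.le⟩

section IsMaximal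

universe u v

variable {L : FirstOrder.Language.{u, v}} {T T' : L.Theory}

theorem exists_modelType_forall_mem_iff_realize (hT : T.IsMaximal) :
    ∃ M : Theory.ModelType.{u, v, max u v} T, ∀ φ : L.Sentence, φ ∈ T ↔ M ⊨ φ := by
  obtain ⟨M⟩ := hT.1
  exact ⟨M, fun φ =>
    (hT.mem_iff_models φ).trans (hT.isComplete.realize_sentence_iff φ M).symm⟩

theorem iSup_mem_iff_of_isMaximal {ι : Type*} [Finite ι] (hT : T.IsMaximal)
    (φ : ι → L.Sentence) : Formula.iSup φ ∈ T ↔ ∃ i, φ i ∈ T := by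
  obtain ⟨M, hM⟩ := exists_modelType_forall_mem_iff_realize hT
  simp only [hM, Sentence.Realize, Formula.realize_iSup]

theorem iInf_mem_iff_of_isMaximal {ι : Type*} [Finite ι] (hT : T.IsMaximal)
    (φ : ι → L.Sentence) : Formula.iInf φ ∈ T ↔ ∀ i, φ i ∈ T := by
  obtain ⟨M, hM⟩ := exists_modelType_forall_mem_iff_realize hT
  simp only [hM, Sentence.Realize, Formula.realize_iInf]

theorem inf_mem_iff_of_isMaximal (hT : T.IsMaximal) (φ ψ : L.Sentence) :
    φ ⊓ ψ ∈ T ↔ φ ∈ T ∧ ψ ∈ T := by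
  obtain ⟨M, hM⟩ := exists_modelType_forall_mem_iff_realize hT
  simp only [hM, Sentence.Realize, Formula.realize_inf]

theorem eq_of_subset_of_isMaximal (hT : T.IsMaximal) (hT' : T'.IsSatisfiable) (h : T ⊆ T') :
    T = T' := by
  refine h.antisymm fun φ hφ => (hT.mem_or_not_mem φ).resolve_right fun hnφ => ?_
  exact Theory.CompleteType.false_of_mem_of_not_mem hT' hφ (h hnφ)

end IsMaximal

section Separation

variable {L : FirstOrder.Language} {P F : Set L.Theory}

theorem exists_sentence_forall_mem_iff_mem (hfin : F.Finite) (hF : ∀ T ∈ F, T.IsMaximal)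
    (Q : Set L.Theory) : ∃ φ : L.Sentence, ∀ T ∈ F, φ ∈ T ↔ T ∈ Q := by
  have separated (T : ↑(F ∩ Q)) (T' : ↑(F \ Q)) : ∃ χ ∈ T.1, χ ∉ T'.1 := by
    refine Set.not_subset.mp fun h => T'.2.2 ?_
    exact eq_of_subset_of_isMaximal (hF T T.2.1) (hF T' T'.2.1).1 h ▸ T.2.2
  choose χ χ_mem χ_notMem using separated
  have := (hfin.inter_of_left Q).to_subtype
  have := (hfin.sdiff (t := Q)).to_subtype
  refine ⟨Formula.iSup fun T => Formula.iInf (χ T), fun T hT => ?_⟩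
  simp only [iSup_mem_iff_of_isMaximal (hF T hT), iInf_mem_iff_of_isMaximal (hF T hT)]
  constructor
  · rintro ⟨T₀, hT₀⟩
    by_contra hTQ
    exact χ_notMem T₀ ⟨T, hT, hTQ⟩ (hT₀ _)
  · exact fun hTQ => ⟨⟨T, hT, hTQ⟩, χ_mem ⟨T, hT, hTQ⟩⟩

theorem exists_sentence_sep_mem_eq (hP : ∀ T ∈ P, T.IsMaximal) {φ : L.Sentence}
    (hfin : {T ∈ P | φ ∈ T}.Finite) {Q : Set L.Theory} (hQ : Q ⊆ {T ∈ P | φ ∈ T}) :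
    ∃ ψ : L.Sentence, {T ∈ P | ψ ∈ T} = Q := by
  obtain ⟨χ, hχ⟩ := exists_sentence_forall_mem_iff_mem hfin (fun T hT => hP T hT.1) Q
  refine ⟨φ ⊓ χ, Set.ext fun T => ⟨fun ⟨hT, hmem⟩ => ?_, fun hT => ?_⟩⟩
  · obtain ⟨hφ, hχT⟩ := (inf_mem_iff_of_isMaximal (hP T hT) φ χ).mp hmem
    exact (hχ T ⟨hT, hφ⟩).mp hχT
  · obtain ⟨hTP, hφ⟩ := hQ hT
    exact ⟨hTP, (inf_mem_iff_of_isMaximal (hP T hTP) φ χ).mpr ⟨hφ, (hχ T (hQ hT)).mpr hT⟩⟩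

theorem mem_finPtSpectrum_of_le (hP : ∀ T ∈ P, T.IsMaximal) {j k : ℕ}
    (hk : k ∈ finPtSpectrum P) (hj : 1 ≤ j) (hjk : j ≤ k) : j ∈ finPtSpectrum P := by
  obtain ⟨-, φ, hfin, rfl⟩ := hk
  obtain ⟨Q, hQ, rfl⟩ := Set.exists_subset_card_eq hjk
  obtain ⟨ψ, hψ⟩ := exists_sentence_sep_mem_eq hP hfin hQ
  exact ⟨hj, ψ, by rw [hψ]; exact hfin.subset hQ, by rw [hψ]⟩

end Separation

/-- The finite part `S` of the pt-spectrum of a nonempty property `P` is downward closed among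
positive integers; consequently, if `S` is nonempty then either `S = {1, …, n}` for some `n ≥ 1`
or `S` is the set of all positive integers. -/
theorem finPtSpectrum_downward_closed {L : FirstOrder.Language} (P : Set L.Theory)
    (hP : ∀ T ∈ P, T.IsMaximal) (hne : P.Nonempty) :
    (∀ k ∈ finPtSpectrum P, ∀ j : ℕ, 1 ≤ j → j ≤ k → j ∈ finPtSpectrum P) ∧
    ((finPtSpectrum P).Nonempty →
      (∃ n : ℕ, 1 ≤ n ∧ finPtSpectrum P = Set.Icc 1 n) ∨
        finPtSpectrum P = {k : ℕ | 1 ≤ k}) := by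
  have down {k j : ℕ} (hk : k ∈ finPtSpectrum P) : 1 ≤ j → j ≤ k → j ∈ finPtSpectrum P :=
    mem_finPtSpectrum_of_le hP hk
  refine ⟨fun k hk j => down hk, fun ⟨k, hk⟩ => ?_⟩
  have hconn : (finPtSpectrum P).OrdConnected :=
    ⟨fun _ hi _ hk _ hj => down hk (hi.1.trans hj.1) hj.2⟩
  have hleast : IsLeast (finPtSpectrum P) 1 := ⟨down hk le_rfl hk.1, fun _ hj => hj.1⟩
  exact (eq_Icc_or_eq_Ici_of_ordConnected hconn hleast).imp_left
    fun ⟨n, hn, heq⟩ => ⟨n, hn.1, heq⟩
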